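/- Let (L,[-,-,-]) be a ternary Leibniz algebra over a field K. Then the tensor product L ⊗ L carries a Leibniz algebra structure, where the bracket is the bilinear map determined on pure tensors by {x⊗y, x'⊗y'} := x ⊗ [y,x',y'] + [x,x',y'] ⊗ y. -/

import Mathlib

open TensorProduct

variable {K : Type*} [Field K] {L : Type*} [AddCommGroup L] [Module K L]

/-- The (right) Leibniz identity for a binary bracket. -/
def LeibnizId {A : Type*} [AddCommGroup A] (b : A → A → A) : Prop :=
  ∀ x y z : A, b (b x y) z = b x (b y z) + b (b x z) y

/-- The (right) ternary Leibniz identity for a ternary bracket. -/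
def TernaryLeibnizId (b : L → L → L → L) : Prop :=
  ∀ x y z t u : L,
    b (b x y z) t u = b x y (b z t u) + b x (b y t u) z + b (b x t u) y z

/-- Let `(L, [-,-,-])` be a ternary Leibniz algebra over a field `K`. Then `L ⊗ L` carries a
Leibniz algebra structure, where the bracket is the bilinear map determined on pure tensors by
`{x⊗y, x'⊗y'} := x ⊗ [y,x',y'] + [x,x',y'] ⊗ y`. -/
theorem ternaryLeibniz_tensor_leibniz (t : L →ₗ[K] L →ₗ[K] L →ₗ[K] L)
    (ht : TernaryLeibnizId fun x y z => t x y z) :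
    ∃ B : L ⊗[K] L →ₗ[K] L ⊗[K] L →ₗ[K] L ⊗[K] L,
      (∀ x y x' y' : L,
        B (x ⊗ₜ[K] y) (x' ⊗ₜ[K] y') = x ⊗ₜ[K] (t y x' y') + (t x x' y') ⊗ₜ[K] y) ∧
      LeibnizId fun a b : L ⊗[K] L => B a b := by
  let R : L ⊗[K] L →ₗ[K] L →ₗ[K] L :=
    TensorProduct.lift ((LinearMap.lflip (R₀ := K)).comp t.flip)
  let M : (L →ₗ[K] L) →ₗ[K] (L ⊗[K] L →ₗ[K] L ⊗[K] L) :=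
    LinearMap.lTensorHom L + LinearMap.rTensorHom L
  have hB : ∀ x y x' y' : L, (M.comp R).flip (x ⊗ₜ[K] y) (x' ⊗ₜ[K] y')
      = x ⊗ₜ[K] (t y x' y') + (t x x' y') ⊗ₜ[K] y := by
    intro x y x' y'
    simp [R, M]
  refine ⟨(M.comp R).flip, hB, ?_⟩
  generalize (M.comp R).flip = B at hB
  intro x y z
  show B (B x y) z = B x (B y z) + B (B x z) y
  induction x with
  | zero => simp
  | add a b ha hb => simp only [map_add, LinearMap.add_apply, ha, hb]; abel
  | tmul a b =>
  induction y with
  | zero => simp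
  | add c d hc hd => simp only [map_add, LinearMap.add_apply, hc, hd]; abel
  | tmul c d =>
  induction z with
  | zero => simp
  | add e f he hf => simp only [map_add, LinearMap.add_apply, he, hf]; abel
  | tmul e f =>
  have h1 := ht a c d e f
  have h2 := ht b c d e f
  simp only at h1 h2
  simp only [hB, map_add, LinearMap.add_apply, h1, h2, TensorProduct.tmul_add,
    TensorProduct.add_tmul]
  abel
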